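/- arXiv:1605.09569 — 2 statements merged into one kernel-verified Lean document; each statement's English description precedes it below -/
import Mathlib

section
/- Let j ≥ 1 be an integer and R > 1. Let v be a complex-valued function which is twice continuously differentiable on an open subset of ℝ² containing {x = (x₁,x₂) : 1 ≤ |x| ≤ R, x₁ ≥ 0}, with Δv = 0 on that open set, v(0, x₂) = 0 whenever 1 ≤ |x₂| ≤ R, and v(R cos t, R sin t) = R^j sin(j(π/2 − t)) for every t ∈ [−π/2, π/2]. Set φ(1) = ∫_{−π/2}^{π/2} v(cos t, sin t) sin(j(π/2 − t)) dt and let ∂_r v(x) = ∇v(x) · x/|x| denote the radial derivative. Then R^{j+1} ∫_{−π/2}^{π/2} ∂_r v(R cos t, R sin t) sin(j(π/2 − t)) dt = [j / (1 − R^{−2j})] · [ (π/2)(R^{2j} + 1) − 2 φ(1) ]. -/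
open ContinuousLinearMap MeasureTheory Set

/-- Green's second identity on a rectangle for two harmonic functions `h` and `w`, whose partial
derivatives are `h₁, h₂` and `w₁, w₂`. -/
lemma green_identity_rectangle {a₁ a₂ b₁ b₂ : ℝ} {h h₁ h₂ : ℝ × ℝ → ℝ} {w w₁ w₂ : ℝ × ℝ → ℂ}
    {h₁' h₂' : ℝ × ℝ → ℝ × ℝ →L[ℝ] ℝ} {w₁' w₂' : ℝ × ℝ → ℝ × ℝ →L[ℝ] ℂ}
    (hh : ∀ x ∈ uIcc a₁ b₁ ×ˢ uIcc a₂ b₂,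
      HasFDerivAt h ((fst ℝ ℝ ℝ).smulRight (h₁ x) + (snd ℝ ℝ ℝ).smulRight (h₂ x)) x)
    (hh₁ : ∀ x ∈ uIcc a₁ b₁ ×ˢ uIcc a₂ b₂, HasFDerivAt h₁ (h₁' x) x)
    (hh₂ : ∀ x ∈ uIcc a₁ b₁ ×ˢ uIcc a₂ b₂, HasFDerivAt h₂ (h₂' x) x)
    (hΔ : ∀ x ∈ uIcc a₁ b₁ ×ˢ uIcc a₂ b₂, h₁' x (1, 0) + h₂' x (0, 1) = 0)
    (hw : ∀ x ∈ uIcc a₁ b₁ ×ˢ uIcc a₂ b₂,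
      HasFDerivAt w ((fst ℝ ℝ ℝ).smulRight (w₁ x) + (snd ℝ ℝ ℝ).smulRight (w₂ x)) x)
    (hw₁ : ∀ x ∈ uIcc a₁ b₁ ×ˢ uIcc a₂ b₂, HasFDerivAt w₁ (w₁' x) x)
    (hw₂ : ∀ x ∈ uIcc a₁ b₁ ×ˢ uIcc a₂ b₂, HasFDerivAt w₂ (w₂' x) x)
    (wΔ : ∀ x ∈ uIcc a₁ b₁ ×ˢ uIcc a₂ b₂, w₁' x (1, 0) + w₂' x (0, 1) = 0) :
    (((∫ x in a₁..b₁, (h (x, b₂) • w₂ (x, b₂) - h₂ (x, b₂) • w (x, b₂))) -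
        ∫ x in a₁..b₁, (h (x, a₂) • w₂ (x, a₂) - h₂ (x, a₂) • w (x, a₂))) +
        ∫ y in a₂..b₂, (h (b₁, y) • w₁ (b₁, y) - h₁ (b₁, y) • w (b₁, y))) -
        ∫ y in a₂..b₂, (h (a₁, y) • w₁ (a₁, y) - h₁ (a₁, y) • w (a₁, y)) = 0 := by
  have hf x (hx : x ∈ uIcc a₁ b₁ ×ˢ uIcc a₂ b₂) :=
    ((hh x hx).fun_smul (hw₁ x hx)).fun_sub ((hh₁ x hx).fun_smul (hw x hx))
  have hg x (hx : x ∈ uIcc a₁ b₁ ×ˢ uIcc a₂ b₂) :=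
    ((hh x hx).fun_smul (hw₂ x hx)).fun_sub ((hh₂ x hx).fun_smul (hw x hx))
  have hsub : Ioo (min a₁ b₁) (max a₁ b₁) ×ˢ Ioo (min a₂ b₂) (max a₂ b₂) ⊆
      uIcc a₁ b₁ ×ˢ uIcc a₂ b₂ := prod_mono Ioo_subset_Icc_self Ioo_subset_Icc_self
  have hdiv := integral2_divergence_prod_of_hasFDerivAt _ _ _ _ a₁ a₂ b₁ b₂
    (fun x hx => (hf x hx).continuousAt.continuousWithinAt)
    (fun x hx => (hg x hx).continuousAt.continuousWithinAt)
    (fun x hx => hf x (hsub hx)) (fun x hx => hg x (hsub hx))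
  have hzero x (hx : x ∈ uIcc a₁ b₁ ×ˢ uIcc a₂ b₂) :
      (h x • w₁' x + ((fst ℝ ℝ ℝ).smulRight (h₁ x) + (snd ℝ ℝ ℝ).smulRight (h₂ x)).smulRight (w₁ x)
        - (h₁ x • ((fst ℝ ℝ ℝ).smulRight (w₁ x) + (snd ℝ ℝ ℝ).smulRight (w₂ x))
          + (h₁' x).smulRight (w x))) (1, 0)
      + (h x • w₂' x
        + ((fst ℝ ℝ ℝ).smulRight (h₁ x) + (snd ℝ ℝ ℝ).smulRight (h₂ x)).smulRight (w₂ x)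
        - (h₂ x • ((fst ℝ ℝ ℝ).smulRight (w₁ x) + (snd ℝ ℝ ℝ).smulRight (w₂ x))
          + (h₂' x).smulRight (w x))) (0, 1) = 0 := by
    have e1 := congrArg (fun z : ℝ => (z : ℂ)) (hΔ x hx)
    have e2 := wΔ x hx
    push_cast at e1
    simp
    linear_combination (h x : ℂ) * e2 - w x * e1
  rw [← hdiv]
  · rw [intervalIntegral.integral_congr (g := fun _ => 0)]
    · simp
    · intro s hs
      simp only
      rw [intervalIntegral.integral_congr (g := fun _ => 0)]
      · simp
      · intro t ht
        exact hzero (s, t) ⟨hs, ht⟩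
  · exact integrableOn_zero.congr_fun (fun x hx => (hzero x hx).symm)
      (measurableSet_uIcc.prod measurableSet_uIcc)

/-- The polar-coordinate map in the variables `(log r, t)`. -/
noncomputable def logPolar (x : ℝ × ℝ) : ℝ × ℝ :=
  (Real.exp x.1 * Real.cos x.2, Real.exp x.1 * Real.sin x.2)

/-- The angular derivative of `logPolar`. -/
noncomputable def logPolarRot (x : ℝ × ℝ) : ℝ × ℝ :=
  (-(Real.exp x.1 * Real.sin x.2), Real.exp x.1 * Real.cos x.2)

lemma hasFDerivAt_logPolar (x : ℝ × ℝ) :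
    HasFDerivAt logPolar ((fst ℝ ℝ ℝ).smulRight (logPolar x) +
      (snd ℝ ℝ ℝ).smulRight (logPolarRot x)) x := by
  have h1 : HasFDerivAt (fun x : ℝ × ℝ => x.1) (fst ℝ ℝ ℝ) x := hasFDerivAt_fst
  have h2 : HasFDerivAt (fun x : ℝ × ℝ => x.2) (snd ℝ ℝ ℝ) x := hasFDerivAt_snd
  refine ((h1.exp.mul h2.cos).prodMk (h1.exp.mul h2.sin)).congr_fderiv ?_
  ext <;> simp [logPolar, logPolarRot, mul_comm]

lemma hasFDerivAt_logPolarRot (x : ℝ × ℝ) :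
    HasFDerivAt logPolarRot ((fst ℝ ℝ ℝ).smulRight (logPolarRot x) -
      (snd ℝ ℝ ℝ).smulRight (logPolar x)) x := by
  have h1 : HasFDerivAt (fun x : ℝ × ℝ => x.1) (fst ℝ ℝ ℝ) x := hasFDerivAt_fst
  have h2 : HasFDerivAt (fun x : ℝ × ℝ => x.2) (snd ℝ ℝ ℝ) x := hasFDerivAt_snd
  refine ((h1.exp.mul h2.sin).neg.prodMk (h1.exp.mul h2.cos)).congr_fderiv ?_
  ext <;> simp [logPolar, logPolarRot, mul_comm]

/-- The sum of the values of a bilinear form on a vector and on its rotation by a right angle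
is a multiple of its trace. -/
lemma bilin_apply_add_rot (L : ℝ × ℝ →L[ℝ] ℝ × ℝ →L[ℝ] ℂ) (a b : ℝ) :
    L (a, b) (a, b) + L (-b, a) (-b, a) =
      ((a ^ 2 + b ^ 2 : ℝ) : ℂ) * (L (1, 0) (1, 0) + L (0, 1) (0, 1)) := by
  have key (c d : ℝ) : ((c, d) : ℝ × ℝ) = c • ((1, 0) : ℝ × ℝ) + d • ((0, 1) : ℝ × ℝ) := by simp
  rw [key a b, key (-b) a]
  simp only [map_add, map_smul, add_apply, smul_apply, Complex.real_smul]
  push_cast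
  ring

/-- The gradient of the harmonic function `sinh (m s) * sin (m (π / 2 - t))`. -/
lemma hasFDerivAt_sinh_mul_sin (m : ℝ) (x : ℝ × ℝ) :
    HasFDerivAt (fun x : ℝ × ℝ => Real.sinh (m * x.1) * Real.sin (m * (Real.pi / 2 - x.2)))
      ((fst ℝ ℝ ℝ).smulRight (m * Real.cosh (m * x.1) * Real.sin (m * (Real.pi / 2 - x.2))) +
        (snd ℝ ℝ ℝ).smulRight
          (-(m * Real.sinh (m * x.1) * Real.cos (m * (Real.pi / 2 - x.2))))) x := by
  have h1 : HasFDerivAt (fun x : ℝ × ℝ => x.1) (fst ℝ ℝ ℝ) x := hasFDerivAt_fst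
  have h2 : HasFDerivAt (fun x : ℝ × ℝ => x.2) (snd ℝ ℝ ℝ) x := hasFDerivAt_snd
  refine ((h1.const_mul m).sinh.mul ((h2.const_sub (Real.pi / 2)).const_mul m).sin).congr_fderiv ?_
  ext <;> simp <;> ring

lemma hasFDerivAt_cosh_mul_sin (m : ℝ) (x : ℝ × ℝ) :
    HasFDerivAt (fun x : ℝ × ℝ => m * Real.cosh (m * x.1) * Real.sin (m * (Real.pi / 2 - x.2)))
      ((fst ℝ ℝ ℝ).smulRight (m ^ 2 * Real.sinh (m * x.1) * Real.sin (m * (Real.pi / 2 - x.2))) +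
        (snd ℝ ℝ ℝ).smulRight
          (-(m ^ 2 * Real.cosh (m * x.1) * Real.cos (m * (Real.pi / 2 - x.2))))) x := by
  have h1 : HasFDerivAt (fun x : ℝ × ℝ => x.1) (fst ℝ ℝ ℝ) x := hasFDerivAt_fst
  have h2 : HasFDerivAt (fun x : ℝ × ℝ => x.2) (snd ℝ ℝ ℝ) x := hasFDerivAt_snd
  refine (((h1.const_mul m).cosh.const_mul m).mul
    ((h2.const_sub (Real.pi / 2)).const_mul m).sin).congr_fderiv ?_
  ext <;> simp <;> ring

lemma hasFDerivAt_sinh_mul_cos (m : ℝ) (x : ℝ × ℝ) :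
    HasFDerivAt (fun x : ℝ × ℝ => -(m * Real.sinh (m * x.1) * Real.cos (m * (Real.pi / 2 - x.2))))
      ((fst ℝ ℝ ℝ).smulRight
          (-(m ^ 2 * Real.cosh (m * x.1) * Real.cos (m * (Real.pi / 2 - x.2)))) -
        (snd ℝ ℝ ℝ).smulRight
          (m ^ 2 * Real.sinh (m * x.1) * Real.sin (m * (Real.pi / 2 - x.2)))) x := by
  have h1 : HasFDerivAt (fun x : ℝ × ℝ => x.1) (fst ℝ ℝ ℝ) x := hasFDerivAt_fst
  have h2 : HasFDerivAt (fun x : ℝ × ℝ => x.2) (snd ℝ ℝ ℝ) x := hasFDerivAt_snd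
  refine (((h1.const_mul m).sinh.const_mul m).mul
    ((h2.const_sub (Real.pi / 2)).const_mul m).cos).neg.congr_fderiv ?_
  ext <;> simp <;> ring

lemma integral_sin_nat_mul_sq {j : ℕ} (hj : 1 ≤ j) :
    ∫ t in (-(Real.pi / 2))..(Real.pi / 2), Real.sin ((j : ℝ) * (Real.pi / 2 - t)) ^ 2
      = Real.pi / 2 := by
  have hj0 : (j : ℝ) ≠ 0 := by positivity
  have h1 := intervalIntegral.integral_comp_sub_left (a := -(Real.pi / 2)) (b := Real.pi / 2)
    (fun u => Real.sin ((j : ℝ) * u) ^ 2) (Real.pi / 2)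
  have h2 := intervalIntegral.integral_comp_mul_left (a := 0) (b := Real.pi)
    (fun u => Real.sin u ^ 2) hj0
  simp only [sub_self, sub_neg_eq_add, add_halves] at h1
  rw [h1, h2, integral_sin_sq]
  simp [Real.sin_nat_mul_pi]
  field_simp

lemma logPolar_mem_halfAnnulus {R : ℝ} (hR : 1 < R) {x : ℝ × ℝ}
    (hx : x ∈ Icc 0 (Real.log R) ×ˢ Icc (-(Real.pi / 2)) (Real.pi / 2)) :
    logPolar x ∈ {x : ℝ × ℝ | 1 ≤ Real.sqrt (x.1 ^ 2 + x.2 ^ 2)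
        ∧ Real.sqrt (x.1 ^ 2 + x.2 ^ 2) ≤ R ∧ 0 ≤ x.1} := by
  obtain ⟨⟨hs0, hs1⟩, ht⟩ := hx
  have hsqrt : Real.sqrt ((logPolar x).1 ^ 2 + (logPolar x).2 ^ 2) = Real.exp x.1 := by
    rw [← Real.sqrt_sq (Real.exp_pos x.1).le]
    congr 1
    simp only [logPolar]
    linear_combination Real.exp x.1 ^ 2 * Real.cos_sq_add_sin_sq x.2
  refine ⟨?_, ?_, ?_⟩
  · rw [hsqrt]
    exact Real.one_le_exp hs0
  · rw [hsqrt]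
    exact (Real.le_log_iff_exp_le (by linarith)).1 hs1
  · exact mul_nonneg (Real.exp_pos _).le (Real.cos_nonneg_of_mem_Icc ht)

/-- Green's identity for `v` in logarithmic polar coordinates against
`sinh (j s) * sin (j (π / 2 - t))`, which vanishes on the inner circle and on the flat sides. -/
lemma sinh_mul_integral_radial (j : ℕ) {R : ℝ} (hR : 1 < R)
    {U : Set (ℝ × ℝ)} (hU : IsOpen U)
    (hKU : {x : ℝ × ℝ | 1 ≤ Real.sqrt (x.1 ^ 2 + x.2 ^ 2)
        ∧ Real.sqrt (x.1 ^ 2 + x.2 ^ 2) ≤ R ∧ 0 ≤ x.1} ⊆ U)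
    {v : ℝ × ℝ → ℂ} (hv : ContDiffOn ℝ 2 v U)
    (hharm : ∀ x ∈ U,
      fderiv ℝ (fun y => fderiv ℝ v y (1, 0)) x (1, 0)
        + fderiv ℝ (fun y => fderiv ℝ v y (0, 1)) x (0, 1) = 0)
    (hbc : ∀ x₂ : ℝ, 1 ≤ |x₂| → |x₂| ≤ R → v (0, x₂) = 0) :
    (∫ t in (-(Real.pi / 2))..(Real.pi / 2),
        ((Real.sinh (j * Real.log R) * Real.sin ((j : ℝ) * (Real.pi / 2 - t)) : ℝ) : ℂ)
            * (R * fderiv ℝ v (R * Real.cos t, R * Real.sin t) (Real.cos t, Real.sin t))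
          - ((j * Real.cosh (j * Real.log R) * Real.sin ((j : ℝ) * (Real.pi / 2 - t)) : ℝ) : ℂ)
            * v (R * Real.cos t, R * Real.sin t))
      = -(j * ∫ t in (-(Real.pi / 2))..(Real.pi / 2),
          v (Real.cos t, Real.sin t) * (Real.sin ((j : ℝ) * (Real.pi / 2 - t)) : ℂ)) := by
  have hR0 : 0 < R := by linarith
  have hlog : 0 ≤ Real.log R := Real.log_nonneg hR.le
  have hpi : -(Real.pi / 2) ≤ Real.pi / 2 := by linarith [Real.pi_pos]
  have hmem x (hx : x ∈ uIcc 0 (Real.log R) ×ˢ uIcc (-(Real.pi / 2)) (Real.pi / 2)) :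
      logPolar x ∈ U := by
    rw [uIcc_of_le hlog, uIcc_of_le hpi] at hx
    exact hKU (logPolar_mem_halfAnnulus hR hx)
  have hv' y (hy : y ∈ U) : HasFDerivAt v (fderiv ℝ v y) y :=
    ((hv.contDiffAt (hU.mem_nhds hy)).differentiableAt (by norm_num)).hasFDerivAt
  have hv'' y (hy : y ∈ U) : HasFDerivAt (fderiv ℝ v) (fderiv ℝ (fderiv ℝ v) y) y :=
    (((hv.contDiffAt (hU.mem_nhds hy)).fderiv_right (m := 1) (by norm_num)).differentiableAt
      (by norm_num)).hasFDerivAt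
  have htrace y (hy : y ∈ U) : fderiv ℝ (fderiv ℝ v) y (1, 0) (1, 0) +
      fderiv ℝ (fderiv ℝ v) y (0, 1) (0, 1) = 0 := by
    have h := hharm y hy
    rw [((hv'' y hy).clm_apply (hasFDerivAt_const _ _)).fderiv,
      ((hv'' y hy).clm_apply (hasFDerivAt_const _ _)).fderiv] at h
    simpa using h
  have hvanish (s : ℝ) (hs : s ∈ uIcc 0 (Real.log R)) :
      v (0, Real.exp s) = 0 ∧ v (0, -Real.exp s) = 0 := by
    rw [uIcc_of_le hlog] at hs
    have hs0 := hs.1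
    have hsR := (Real.le_log_iff_exp_le hR0).1 hs.2
    constructor <;> apply hbc <;> simpa
  have green := green_identity_rectangle
    (a₁ := 0) (b₁ := Real.log R) (a₂ := -(Real.pi / 2)) (b₂ := Real.pi / 2)
    (fun x _ => hasFDerivAt_sinh_mul_sin (j : ℝ) x)
    (fun x _ => hasFDerivAt_cosh_mul_sin (j : ℝ) x)
    (fun x _ => hasFDerivAt_sinh_mul_cos (j : ℝ) x)
    (fun x _ => by simp)
    (w := fun x => v (logPolar x))
    (w₁ := fun x => fderiv ℝ v (logPolar x) (logPolar x))
    (w₂ := fun x => fderiv ℝ v (logPolar x) (logPolarRot x))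
    (fun x hx => ((hv' _ (hmem x hx)).comp x (hasFDerivAt_logPolar x)).congr_fderiv
      (by ext <;> simp))
    (fun x hx => ((hv'' _ (hmem x hx)).comp x (hasFDerivAt_logPolar x)).clm_apply
      (hasFDerivAt_logPolar x))
    (fun x hx => ((hv'' _ (hmem x hx)).comp x (hasFDerivAt_logPolar x)).clm_apply
      (hasFDerivAt_logPolarRot x))
    (fun x hx => by
      have h := bilin_apply_add_rot (fderiv ℝ (fderiv ℝ v) (logPolar x)) (logPolar x).1
        (logPolar x).2
      rw [htrace _ (hmem x hx), mul_zero] at h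
      have hrot : (-(logPolar x).2, (logPolar x).1) = logPolarRot x := rfl
      rw [hrot, Prod.mk.eta] at h
      simp
      linear_combination h)
  have hside (t : ℝ) (hS : Real.sin ((j : ℝ) * (Real.pi / 2 - t)) = 0)
      (hz : ∀ s ∈ uIcc 0 (Real.log R), v (logPolar (s, t)) = 0) :
      ∫ s in (0 : ℝ)..(Real.log R),
        ((Real.sinh (j * s) * Real.sin (j * (Real.pi / 2 - t))) •
          fderiv ℝ v (logPolar (s, t)) (logPolarRot (s, t)) -
        (-(j * Real.sinh (j * s) * Real.cos (j * (Real.pi / 2 - t)))) • v (logPolar (s, t)))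
        = 0 := by
    rw [intervalIntegral.integral_congr (g := fun _ => 0)]
    · simp
    · intro s hs
      simp [hz s hs, hS]
  rw [hside (Real.pi / 2) (by simp) (fun s hs => by simpa [logPolar] using (hvanish s hs).1),
    hside (-(Real.pi / 2)) (by simp [Real.sin_nat_mul_pi])
      (fun s hs => by simpa [logPolar] using (hvanish s hs).2), sub_zero, zero_add,
    sub_eq_zero] at green
  have hpolar (t : ℝ) : logPolar (Real.log R, t) = R • (Real.cos t, Real.sin t) := by
    simp [logPolar, Real.exp_log hR0]
  have hinner (t : ℝ) : logPolar (0, t) = (Real.cos t, Real.sin t) := by simp [logPolar]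
  simp only [hpolar, map_smul] at green
  simp only [hinner, Complex.real_smul, mul_zero, Real.sinh_zero, Real.cosh_zero,
    zero_mul, Complex.ofReal_zero, zero_sub, mul_one, Prod.smul_mk, smul_eq_mul] at green
  rw [green, intervalIntegral.integral_neg, ← intervalIntegral.integral_const_mul]
  congr 2
  ext t
  push_cast
  ring


/-- Flux formula: for `v` harmonic on a half-annulus `{1 ≤ |x| ≤ R, x₁ ≥ 0}`, vanishing on
the flat boundary parts and agreeing with `ψ_j` on the outer half-circle,
`R^{j+1} ∫ (∂_r v)(R cos t, R sin t) sin(j(π/2-t)) dt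
  = (j/(1-R^{-2j})) ((π/2)(R^{2j}+1) - 2 φ(1))`. -/
theorem flux_formula (j : ℕ) (hj : 1 ≤ j) (R : ℝ) (hR : 1 < R)
    (U : Set (ℝ × ℝ)) (hU : IsOpen U)
    (hKU : {x : ℝ × ℝ | 1 ≤ Real.sqrt (x.1 ^ 2 + x.2 ^ 2)
        ∧ Real.sqrt (x.1 ^ 2 + x.2 ^ 2) ≤ R ∧ 0 ≤ x.1} ⊆ U)
    (v : ℝ × ℝ → ℂ) (hv : ContDiffOn ℝ 2 v U)
    (hharm : ∀ x ∈ U,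
      fderiv ℝ (fun y => fderiv ℝ v y (1, 0)) x (1, 0)
        + fderiv ℝ (fun y => fderiv ℝ v y (0, 1)) x (0, 1) = 0)
    (hbc : ∀ x₂ : ℝ, 1 ≤ |x₂| → |x₂| ≤ R → v (0, x₂) = 0)
    (houter : ∀ t ∈ Set.Icc (-(Real.pi / 2)) (Real.pi / 2),
      v (R * Real.cos t, R * Real.sin t)
        = ((R ^ j * Real.sin ((j : ℝ) * (Real.pi / 2 - t)) : ℝ) : ℂ))
    (φ1 : ℂ)
    (hφ1 : φ1 = ∫ t in (-(Real.pi / 2))..(Real.pi / 2),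
        v (Real.cos t, Real.sin t) * (Real.sin ((j : ℝ) * (Real.pi / 2 - t)) : ℂ)) :
    (R : ℂ) ^ (j + 1) * ∫ t in (-(Real.pi / 2))..(Real.pi / 2),
        (fderiv ℝ v (R * Real.cos t, R * Real.sin t) (Real.cos t, Real.sin t))
          * (Real.sin ((j : ℝ) * (Real.pi / 2 - t)) : ℂ)
      = ((j : ℂ) / (1 - ((R : ℂ) ^ (2 * j))⁻¹))
          * (((Real.pi / 2 : ℝ) : ℂ) * ((R : ℂ) ^ (2 * j) + 1) - 2 * φ1) := by
  have hR0 : 0 < R := by linarith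
  have hpi : -(Real.pi / 2) ≤ Real.pi / 2 := by linarith [Real.pi_pos]
  have hmem t (ht : t ∈ Icc (-(Real.pi / 2)) (Real.pi / 2)) :
      (R * Real.cos t, R * Real.sin t) ∈ U := by
    have h := hKU (logPolar_mem_halfAnnulus hR (x := (Real.log R, t))
      ⟨⟨Real.log_nonneg hR.le, le_rfl⟩, ht⟩)
    simpa [logPolar, Real.exp_log hR0] using h
  have hint : IntervalIntegrable (fun t => (fderiv ℝ v (R * Real.cos t, R * Real.sin t)
      (Real.cos t, Real.sin t)) * (Real.sin ((j : ℝ) * (Real.pi / 2 - t)) : ℂ)) volume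
      (-(Real.pi / 2)) (Real.pi / 2) := by
    apply ContinuousOn.intervalIntegrable_of_Icc hpi
    have hc : ContinuousOn (fun t => fderiv ℝ v (R * Real.cos t, R * Real.sin t))
        (Icc (-(Real.pi / 2)) (Real.pi / 2)) :=
      (hv.continuousOn_fderiv_of_isOpen hU (by norm_num)).comp (by fun_prop) hmem
    exact (hc.clm_apply (by fun_prop)).mul (by fun_prop)
  have hgreen := sinh_mul_integral_radial j hR hU hKU hv hharm hbc
  rw [← hφ1, intervalIntegral.integral_congr (g := fun t =>
      ((Real.sinh (j * Real.log R) * R : ℝ) : ℂ) *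
        ((fderiv ℝ v (R * Real.cos t, R * Real.sin t) (Real.cos t, Real.sin t))
          * (Real.sin ((j : ℝ) * (Real.pi / 2 - t)) : ℂ)) -
      ((j * Real.cosh (j * Real.log R) * R ^ j : ℝ) : ℂ) *
        ((Real.sin ((j : ℝ) * (Real.pi / 2 - t)) ^ 2 : ℝ) : ℂ)) (by
      intro t ht
      rw [uIcc_of_le hpi] at ht
      simp only [houter t ht]
      push_cast
      ring),
    intervalIntegral.integral_sub (hint.const_mul _)
      (Continuous.intervalIntegrable (by fun_prop) _ _),
    intervalIntegral.integral_const_mul, intervalIntegral.integral_const_mul,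
    intervalIntegral.integral_ofReal, integral_sin_nat_mul_sq hj] at hgreen
  set I := ∫ t in (-(Real.pi / 2))..(Real.pi / 2),
    (fderiv ℝ v (R * Real.cos t, R * Real.sin t) (Real.cos t, Real.sin t))
      * (Real.sin ((j : ℝ) * (Real.pi / 2 - t)) : ℂ)
  have hexp : Real.exp (j * Real.log R) = R ^ j := by
    rw [Real.exp_nat_mul, Real.exp_log hR0]
  rw [Real.sinh_eq, Real.cosh_eq, Real.exp_neg, hexp] at hgreen
  have hRj : (1 : ℝ) < R ^ j := one_lt_pow₀ hR (by lia)
  have hR2 : (R : ℂ) ^ (2 * j) = ((R : ℂ) ^ j) ^ 2 := by ring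
  have hne : (R : ℂ) ^ j ≠ 0 := by exact_mod_cast (by linarith : R ^ j ≠ 0)
  have hne1 : ((R : ℂ) ^ j) ^ 2 - 1 ≠ 0 := by
    have : (R ^ j) ^ 2 - 1 ≠ 0 := by nlinarith
    exact_mod_cast this
  push_cast at hgreen ⊢
  rw [hR2, pow_succ]
  generalize (R : ℂ) ^ j = q at hgreen hne hne1 ⊢
  have hden : 1 - (q ^ 2)⁻¹ = (q ^ 2 - 1) / q ^ 2 := by field_simp
  rw [hden]
  field_simp at hgreen ⊢
  linear_combination hgreen
end

section
/- Let a = (a₁, a₂) ∈ ℝ², r > 0, and let A_a(x) = (1/2)(−(x₂ − a₂), x₁ − a₁)/|x − a|². Then for every complex-valued function u which is smooth on an open neighborhood of the closed disk of center a and radius r and vanishes on a neighborhood of a, the Hardy-type inequality ∫_{D_r(a)} |i∇u(x) + A_a(x) u(x)|² dx ≥ (1/4) ∫_{D_r(a)} |u(x)|² / |x − a|² dx holds, where D_r(a) = {x ∈ ℝ² : |x − a| < r}. -/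
open MeasureTheory Set Real Filter Topology

/-- The `n`-th Fourier coefficient of the derivative of a `C¹` function with equal boundary values
on `[-π, π]` is `i n` times the coefficient of the function. -/
theorem fourierCoeffOn_deriv_of_periodic {f f' : ℝ → ℂ} (hab : -π < π)
    (hf : ∀ t, HasDerivAt f (f' t) t) (hf' : Continuous f') (hper : f (-π) = f π) (n : ℤ) :
    fourierCoeffOn hab f' n = Complex.I * n * fourierCoeffOn hab f n := by
  have hint : IntervalIntegrable f' volume (-π) π := hf'.intervalIntegrable _ _
  rcases eq_or_ne n 0 with rfl | hn
  · rw [fourierCoeffOn_eq_integral]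
    simp [intervalIntegral.integral_eq_sub_of_hasDerivAt (fun t _ => hf t) hint, hper]
  · rw [fourierCoeffOn_of_hasDerivAt hab hn (fun t _ => hf t) hint, hper]
    have hn' : (n : ℂ) ≠ 0 := by exact_mod_cast hn
    have hpi : (π : ℂ) ≠ 0 := by exact_mod_cast pi_ne_zero
    have hI := Complex.I_ne_zero
    push_cast
    field_simp
    ring

theorem fourierCoeffOn_add_of_continuous {f g : ℝ → ℂ} {a b : ℝ} (hab : a < b)
    (hf : Continuous f) (hg : Continuous g) (n : ℤ) :
    fourierCoeffOn hab (fun t => f t + g t) n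
      = fourierCoeffOn hab f n + fourierCoeffOn hab g n := by
  have hfou : Continuous fun x : ℝ => fourier (-n) (x : AddCircle (b - a)) :=
    (ContinuousMap.continuous _).comp (AddCircle.continuous_mk' _)
  simp only [fourierCoeffOn_eq_integral, smul_add]
  have hint : ∀ h : ℝ → ℂ, Continuous h → IntervalIntegrable
      (fun x : ℝ => fourier (-n) (x : AddCircle (b - a)) • h x) volume a b :=
    fun h hh => (hfou.smul hh).intervalIntegrable _ _
  rw [intervalIntegral.integral_add (hint f hf) (hint g hg), smul_add]

/-- The lowest eigenvalue of `(i d/dθ + 1/2)²` on the circle is `1/4`. -/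
theorem integral_norm_sq_le_integral_magnetic_deriv {f f' : ℝ → ℂ}
    (hf : ∀ t, HasDerivAt f (f' t) t) (hf' : Continuous f') (hper : f (-π) = f π) :
    1 / 4 * ∫ t in (-π)..π, ‖f t‖ ^ 2
      ≤ ∫ t in (-π)..π, ‖Complex.I * f' t + 1 / 2 * f t‖ ^ 2 := by
  have hab : -π < π := by linarith [pi_pos]
  have hfc : Continuous f := continuous_iff_continuousAt.2 fun t => (hf t).continuousAt
  have hmem : ∀ g : ℝ → ℂ, Continuous g → MemLp g 2 (volume.restrict (Ioc (-π) π)) := by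
    intro g hg
    obtain ⟨C, hC⟩ := isCompact_Icc.exists_bound_of_continuousOn (s := Icc (-π) π) hg.continuousOn
    refine MemLp.of_bound hg.aestronglyMeasurable C ?_
    filter_upwards [ae_restrict_mem measurableSet_Ioc] with t ht
    exact hC t (Ioc_subset_Icc_self ht)
  have hg : Continuous fun t => Complex.I * f' t + 1 / 2 * f t := by fun_prop
  have hsum := hasSum_sq_fourierCoeffOn hab (hmem f hfc)
  have hsum' := hasSum_sq_fourierCoeffOn hab (hmem _ hg)
  have hle : ∀ n : ℤ, 1 / 4 * ‖fourierCoeffOn hab f n‖ ^ 2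
      ≤ ‖fourierCoeffOn hab (fun t => Complex.I * f' t + 1 / 2 * f t) n‖ ^ 2 := by
    intro n
    have hcoeff : fourierCoeffOn hab (fun t => Complex.I * f' t + 1 / 2 * f t) n
        = ((1 / 2 - n : ℝ) : ℂ) * fourierCoeffOn hab f n := by
      rw [fourierCoeffOn_add_of_continuous hab (by fun_prop) (by fun_prop),
        fourierCoeffOn.const_mul, fourierCoeffOn.const_mul,
        fourierCoeffOn_deriv_of_periodic hab hf hf' hper]
      push_cast
      linear_combination (n : ℂ) * fourierCoeffOn hab f n * Complex.I_mul_I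
    rw [hcoeff, norm_mul, mul_pow, Complex.norm_real, norm_eq_abs, sq_abs]
    refine mul_le_mul_of_nonneg_right ?_ (sq_nonneg _)
    have hn : (0 : ℝ) ≤ n * (n - 1) := by
      have : 0 ≤ n * (n - 1) := by
        rcases le_or_gt n 0 with h | h
        · exact mul_nonneg_of_nonpos_of_nonpos h (by lia)
        · exact mul_nonneg h.le (by lia)
      exact_mod_cast this
    nlinarith
  have := hasSum_le hle (hsum.mul_left (1 / 4)) hsum'
  simp only [smul_eq_mul] at this
  have hpos : 0 < (π - -π)⁻¹ := by positivity
  refine le_of_mul_le_mul_left ?_ hpos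
  linarith

/-- The tangential component of a vector in `ℂ²` is bounded by the whole vector. -/
theorem norm_sq_tangential_le (X Y : ℂ) (t : ℝ) :
    ‖-(sin t : ℂ) * X + (cos t : ℂ) * Y‖ ^ 2 ≤ ‖X‖ ^ 2 + ‖Y‖ ^ 2 := by
  simp only [Complex.sq_norm, Complex.normSq_apply, Complex.add_re, Complex.add_im,
    Complex.mul_re, Complex.mul_im, Complex.neg_re, Complex.neg_im, Complex.ofReal_re,
    Complex.ofReal_im]
  have h := sin_sq_add_cos_sq t
  have hre := sq_nonneg (cos t * X.re + sin t * Y.re)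
  have him := sq_nonneg (cos t * X.im + sin t * Y.im)
  have : X.re * X.re + X.im * X.im + (Y.re * Y.re + Y.im * Y.im)
      = (sin t ^ 2 + cos t ^ 2) * (X.re * X.re + X.im * X.im + (Y.re * Y.re + Y.im * Y.im)) := by
    rw [h, one_mul]
  rw [this]
  linarith

/-- A function on a disk has nonnegative integral as soon as all its integrals over concentric
circles are nonnegative. -/
theorem setIntegral_disk_nonneg_of_circles (a : ℝ × ℝ) (r : ℝ) (H : ℝ × ℝ → ℝ)
    (hH : ∀ ρ, 0 < ρ → ρ < r →
      0 ≤ ∫ t in Ioo (-π) π, H (a.1 + ρ * cos t, a.2 + ρ * sin t)) :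
    0 ≤ ∫ x in {x : ℝ × ℝ | √((x.1 - a.1) ^ 2 + (x.2 - a.2) ^ 2) < r}, H x := by
  have hmeas : MeasurableSet {x : ℝ × ℝ | √((x.1 - a.1) ^ 2 + (x.2 - a.2) ^ 2) < r} :=
    (isOpen_lt (by fun_prop) continuous_const).measurableSet
  rw [← integral_indicator hmeas, ← integral_add_right_eq_self _ a,
    ← integral_comp_polarCoord_symm]
  have htarget : polarCoord.target = Ioi (0 : ℝ) ×ˢ Ioo (-π) π := rfl
  rw [htarget]
  by_cases hint : IntegrableOn (fun p : ℝ × ℝ => p.1 •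
      ({x : ℝ × ℝ | √((x.1 - a.1) ^ 2 + (x.2 - a.2) ^ 2) < r}.indicator H
        (polarCoord.symm p + a))) (Ioi (0 : ℝ) ×ˢ Ioo (-π) π) volume
  swap
  · rw [integral_undef hint]
  rw [Measure.volume_eq_prod] at hint ⊢
  rw [setIntegral_prod _ hint]
  refine setIntegral_nonneg measurableSet_Ioi fun ρ (hρ : 0 < ρ) => ?_
  simp only [smul_eq_mul, integral_const_mul]
  refine mul_nonneg hρ.le ?_
  have hsqrt : ∀ t, √((ρ * cos t) ^ 2 + (ρ * sin t) ^ 2) = ρ := by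
    intro t
    rw [show (ρ * cos t) ^ 2 + (ρ * sin t) ^ 2 = ρ ^ 2 by
      linear_combination ρ ^ 2 * sin_sq_add_cos_sq t, sqrt_sq hρ.le]
  by_cases hρr : ρ < r
  · refine (hH ρ hρ hρr).trans_eq (integral_congr_ae (Eventually.of_forall fun t => ?_))
    simp only [indicator, polarCoord_symm_apply, mem_ofPred_eq, Prod.fst_add, Prod.snd_add,
      add_sub_cancel_right, hsqrt, hρr, if_true]
    rw [add_comm (ρ * cos t, ρ * sin t) a]
    rfl
  · simp [indicator, hsqrt, hρr]

/-- The circle estimate for the magnetic energy density. -/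
theorem integral_circle_magnetic_energy_nonneg (a : ℝ × ℝ) {ρ : ℝ} (hρ : 0 < ρ)
    {U : Set (ℝ × ℝ)} (hU : IsOpen U) {u : ℝ × ℝ → ℂ} (hu : ContDiffOn ℝ 1 u U)
    (hcircle : ∀ t, (a.1 + ρ * cos t, a.2 + ρ * sin t) ∈ U) {H : ℝ × ℝ → ℝ}
    (hH : ∀ x : ℝ × ℝ, H x =
      ‖Complex.I * fderiv ℝ u x (1, 0)
            + ((-(x.2 - a.2) / (2 * ((x.1 - a.1) ^ 2 + (x.2 - a.2) ^ 2)) : ℝ) : ℂ) * u x‖ ^ 2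
          + ‖Complex.I * fderiv ℝ u x (0, 1)
            + (((x.1 - a.1) / (2 * ((x.1 - a.1) ^ 2 + (x.2 - a.2) ^ 2)) : ℝ) : ℂ) * u x‖ ^ 2
      - 1 / 4 * (‖u x‖ ^ 2 / ((x.1 - a.1) ^ 2 + (x.2 - a.2) ^ 2))) :
    0 ≤ ∫ t in Ioo (-π) π, H (a.1 + ρ * cos t, a.2 + ρ * sin t) := by
  set γ : ℝ → ℝ × ℝ := fun t => (a.1 + ρ * cos t, a.2 + ρ * sin t) with hγ
  set f : ℝ → ℂ := fun t => u (γ t) with hfdef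
  set f' : ℝ → ℂ := fun t => fderiv ℝ u (γ t) (-(ρ * sin t), ρ * cos t) with hf'def
  have hγd : ∀ t, HasDerivAt γ (-(ρ * sin t), ρ * cos t) t := by
    intro t
    refine HasDerivAt.prodMk ?_ ?_
    · simpa using ((hasDerivAt_cos t).const_mul ρ).const_add a.1
    · simpa using ((hasDerivAt_sin t).const_mul ρ).const_add a.2
  have hγc : Continuous γ := by fun_prop
  have hf : ∀ t, HasDerivAt f (f' t) t := fun t =>
    (((hu.differentiableOn one_ne_zero).differentiableAt
      (hU.mem_nhds (hcircle t))).hasFDerivAt).comp_hasDerivAt t (hγd t)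
  have hfc : Continuous f := continuous_iff_continuousAt.2 fun t => (hf t).continuousAt
  have hfd : Continuous fun t => fderiv ℝ u (γ t) :=
    (hu.continuousOn_fderiv_of_isOpen hU le_rfl).comp_continuous hγc hcircle
  have hf' : Continuous f' := hfd.clm_apply (by fun_prop)
  have hper : f (-π) = f π := by simp [hfdef, hγ]
  have hbase := integral_norm_sq_le_integral_magnetic_deriv hf hf' hper
  rw [intervalIntegral.integral_of_le (by linarith [pi_pos]),
    intervalIntegral.integral_of_le (by linarith [pi_pos]), ← integral_const_mul,
    integral_Ioc_eq_integral_Ioo, integral_Ioc_eq_integral_Ioo] at hbase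
  have hpoint : ∀ t, ρ⁻¹ ^ 2 *
      (‖Complex.I * f' t + 1 / 2 * f t‖ ^ 2 - 1 / 4 * ‖f t‖ ^ 2) ≤ H (γ t) := by
    intro t
    have hsq : (γ t).1 - a.1 = ρ * cos t ∧ (γ t).2 - a.2 = ρ * sin t := by simp [hγ]
    have hρ2 : (ρ * cos t) ^ 2 + (ρ * sin t) ^ 2 = ρ ^ 2 := by
      linear_combination ρ ^ 2 * sin_sq_add_cos_sq t
    have hf't : f' t = ρ * (-(sin t : ℂ) * fderiv ℝ u (γ t) (1, 0)
        + (cos t : ℂ) * fderiv ℝ u (γ t) (0, 1)) := by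
      have hdir : ((-(ρ * sin t), ρ * cos t) : ℝ × ℝ)
          = (-(ρ * sin t)) • ((1, 0) : ℝ × ℝ) + (ρ * cos t) • ((0, 1) : ℝ × ℝ) := by simp
      simp only [hf'def]
      rw [hdir, map_add, map_smul, map_smul]
      simp only [Complex.real_smul]
      push_cast
      ring
    rw [hH, hsq.1, hsq.2, hρ2]
    set X := Complex.I * fderiv ℝ u (γ t) (1, 0)
      + ((-(ρ * sin t) / (2 * ρ ^ 2) : ℝ) : ℂ) * u (γ t) with hX
    set Y := Complex.I * fderiv ℝ u (γ t) (0, 1)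
      + (((ρ * cos t) / (2 * ρ ^ 2) : ℝ) : ℂ) * u (γ t) with hY
    have hρ0 : (ρ : ℂ) ≠ 0 := by exact_mod_cast hρ.ne'
    have htang : -(sin t : ℂ) * X + (cos t : ℂ) * Y
        = ((ρ⁻¹ : ℝ) : ℂ) * (Complex.I * f' t + 1 / 2 * f t) := by
      have htrig : (sin t : ℂ) ^ 2 + (cos t : ℂ) ^ 2 = 1 := by
        exact_mod_cast sin_sq_add_cos_sq t
      rw [hf't, hX, hY]
      simp only [hfdef]
      push_cast at htrig ⊢
      field_simp
      linear_combination u (γ t) * htrig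
    have hle := norm_sq_tangential_le X Y t
    rw [htang, norm_mul, mul_pow, Complex.norm_real, norm_eq_abs, sq_abs] at hle
    have : 1 / 4 * (‖u (γ t)‖ ^ 2 / ρ ^ 2) = ρ⁻¹ ^ 2 * (1 / 4 * ‖f t‖ ^ 2) := by
      simp only [hfdef]
      field_simp
    rw [this]
    linarith
  have hI : ∀ g : ℝ → ℝ, Continuous g → IntegrableOn g (Ioo (-π) π) := fun g hg =>
    (hg.integrableOn_Icc).mono_set Ioo_subset_Icc_self
  have hI1 := hI (fun t => ‖Complex.I * f' t + 1 / 2 * f t‖ ^ 2) (by fun_prop)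
  have hI2 := hI (fun t => 1 / 4 * ‖f t‖ ^ 2) (by fun_prop)
  by_cases hHint : IntegrableOn (fun t => H (γ t)) (Ioo (-π) π)
  swap
  · rw [integral_undef hHint]
  refine le_trans ?_ (integral_mono ((hI1.sub hI2).const_mul (ρ⁻¹ ^ 2)) hHint hpoint)
  rw [integral_const_mul]
  refine mul_nonneg (sq_nonneg _) ?_
  simp only [Pi.sub_apply]
  rw [integral_sub hI1 hI2]
  linarith

theorem isCompact_closed_disk (a : ℝ × ℝ) (r : ℝ) :
    IsCompact {x : ℝ × ℝ | √((x.1 - a.1) ^ 2 + (x.2 - a.2) ^ 2) ≤ r} := by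
  refine (isCompact_closedBall a r).of_isClosed_subset
    (isClosed_le (by fun_prop) continuous_const) fun x (hx : _ ≤ r) => ?_
  rw [Metric.mem_closedBall, Prod.dist_eq, Real.dist_eq, Real.dist_eq]
  exact max_le ((abs_le_sqrt (by nlinarith [sq_nonneg (x.2 - a.2)])).trans hx)
    ((abs_le_sqrt (by nlinarith [sq_nonneg (x.1 - a.1)])).trans hx)

/-- A function continuous on a neighbourhood of the closed disk away from the centre, and vanishing
near the centre, is integrable on the open disk. -/
theorem integrableOn_disk_of_vanish {a : ℝ × ℝ} {r ε : ℝ} (hε : 0 < ε) {g : ℝ × ℝ → ℝ}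
    {U : Set (ℝ × ℝ)} (hU : IsOpen U)
    (hUD : {x : ℝ × ℝ | √((x.1 - a.1) ^ 2 + (x.2 - a.2) ^ 2) ≤ r} ⊆ U)
    (hg : ContinuousOn g (U \ {a}))
    (hvan : ∀ x : ℝ × ℝ, √((x.1 - a.1) ^ 2 + (x.2 - a.2) ^ 2) < ε → g x = 0) :
    IntegrableOn g {x : ℝ × ℝ | √((x.1 - a.1) ^ 2 + (x.2 - a.2) ^ 2) < r} := by
  have hcont : ContinuousOn g U := by
    intro x hx
    refine ContinuousAt.continuousWithinAt ?_
    by_cases hxa : x = a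
    · have hopen : IsOpen {y : ℝ × ℝ | √((y.1 - a.1) ^ 2 + (y.2 - a.2) ^ 2) < ε} :=
        isOpen_lt (by fun_prop) continuous_const
      have hmem : x ∈ {y : ℝ × ℝ | √((y.1 - a.1) ^ 2 + (y.2 - a.2) ^ 2) < ε} := by
        simpa [hxa] using hε
      have hev : g =ᶠ[𝓝 x] fun _ => 0 := by
        filter_upwards [hopen.mem_nhds hmem] with y hy using hvan y hy
      exact continuousAt_const.congr hev.symm
    · exact hg.continuousAt ((hU.sdiff isClosed_singleton).mem_nhds ⟨hx, hxa⟩)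
  refine ((hcont.mono hUD).integrableOn_compact (isCompact_closed_disk a r)).mono_set ?_
  exact fun x (hx : _ < r) => hx.le

/-- Hardy-type inequality on a disk for the Aharonov–Bohm potential
`A_a(x) = (1/2)(-(x₂-a₂), x₁-a₁)/|x-a|²`: for `u` smooth on a neighborhood of the
closed disk `D_r(a)` and vanishing near `a`,
`∫_{D_r(a)} |i∇u + A_a u|² ≥ (1/4) ∫_{D_r(a)} |u|²/|x-a|²`. -/
theorem hardy_aharonov_bohm_disk (a : ℝ × ℝ) (r : ℝ) (hr : 0 < r)
    (U : Set (ℝ × ℝ)) (hU : IsOpen U)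
    (hUD : {x : ℝ × ℝ | Real.sqrt ((x.1 - a.1) ^ 2 + (x.2 - a.2) ^ 2) ≤ r} ⊆ U)
    (u : ℝ × ℝ → ℂ) (hu : ContDiffOn ℝ (⊤ : ℕ∞) u U)
    (hvan : ∃ ε : ℝ, 0 < ε ∧ ∀ x : ℝ × ℝ,
      Real.sqrt ((x.1 - a.1) ^ 2 + (x.2 - a.2) ^ 2) < ε → u x = 0) :
    (∫ x in {x : ℝ × ℝ | Real.sqrt ((x.1 - a.1) ^ 2 + (x.2 - a.2) ^ 2) < r},
        (‖Complex.I * fderiv ℝ u x (1, 0)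
            + ((-(x.2 - a.2) / (2 * ((x.1 - a.1) ^ 2 + (x.2 - a.2) ^ 2)) : ℝ) : ℂ) * u x‖ ^ 2
          + ‖Complex.I * fderiv ℝ u x (0, 1)
            + (((x.1 - a.1) / (2 * ((x.1 - a.1) ^ 2 + (x.2 - a.2) ^ 2)) : ℝ) : ℂ) * u x‖ ^ 2))
      ≥ (1 / 4) * ∫ x in {x : ℝ × ℝ | Real.sqrt ((x.1 - a.1) ^ 2 + (x.2 - a.2) ^ 2) < r},
          ‖u x‖ ^ 2 / ((x.1 - a.1) ^ 2 + (x.2 - a.2) ^ 2) := by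
  obtain ⟨ε, hε, hvan⟩ := hvan
  have hu1 : ContDiffOn ℝ 1 u U := hu.of_le (by exact_mod_cast le_top)
  have huc : ContinuousOn u (U \ {a}) := hu1.continuousOn.mono sdiff_subset
  have hdc : ContinuousOn (fderiv ℝ u) (U \ {a}) :=
    (hu1.continuousOn_fderiv_of_isOpen hU le_rfl).mono sdiff_subset
  have hne : ∀ x ∈ U \ {a}, (x.1 - a.1) ^ 2 + (x.2 - a.2) ^ 2 ≠ 0 := by
    intro x hx h
    refine hx.2 (Prod.ext ?_ ?_) <;> nlinarith [sq_nonneg (x.1 - a.1), sq_nonneg (x.2 - a.2)]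
  have hdvan : ∀ x : ℝ × ℝ, √((x.1 - a.1) ^ 2 + (x.2 - a.2) ^ 2) < ε → fderiv ℝ u x = 0 := by
    intro x hx
    have hopen : IsOpen {y : ℝ × ℝ | √((y.1 - a.1) ^ 2 + (y.2 - a.2) ^ 2) < ε} :=
      isOpen_lt (by fun_prop) continuous_const
    have hev : u =ᶠ[𝓝 x] fun _ => 0 := by
      filter_upwards [hopen.mem_nhds hx] with y hy using hvan y hy
    simp [hev.fderiv_eq]
  have hne2 : ∀ x ∈ U \ {a}, 2 * ((x.1 - a.1) ^ 2 + (x.2 - a.2) ^ 2) ≠ 0 :=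
    fun x hx => mul_ne_zero two_ne_zero (hne x hx)
  have hA1 : ContinuousOn (fun x : ℝ × ℝ => ((-(x.2 - a.2) /
      (2 * ((x.1 - a.1) ^ 2 + (x.2 - a.2) ^ 2)) : ℝ) : ℂ)) (U \ {a}) :=
    Complex.continuous_ofReal.comp_continuousOn
      (ContinuousOn.div (by fun_prop) (by fun_prop) hne2)
  have hA2 : ContinuousOn (fun x : ℝ × ℝ => (((x.1 - a.1) /
      (2 * ((x.1 - a.1) ^ 2 + (x.2 - a.2) ^ 2)) : ℝ) : ℂ)) (U \ {a}) :=
    Complex.continuous_ofReal.comp_continuousOn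
      (ContinuousOn.div (by fun_prop) (by fun_prop) hne2)
  have hD1 : ContinuousOn (fun x => fderiv ℝ u x (1, 0)) (U \ {a}) :=
    hdc.clm_apply continuousOn_const
  have hD2 : ContinuousOn (fun x => fderiv ℝ u x (0, 1)) (U \ {a}) :=
    hdc.clm_apply continuousOn_const
  have hF : IntegrableOn (fun x : ℝ × ℝ => ‖Complex.I * fderiv ℝ u x (1, 0)
            + ((-(x.2 - a.2) / (2 * ((x.1 - a.1) ^ 2 + (x.2 - a.2) ^ 2)) : ℝ) : ℂ) * u x‖ ^ 2
          + ‖Complex.I * fderiv ℝ u x (0, 1)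
            + (((x.1 - a.1) / (2 * ((x.1 - a.1) ^ 2 + (x.2 - a.2) ^ 2)) : ℝ) : ℂ) * u x‖ ^ 2)
      {x : ℝ × ℝ | √((x.1 - a.1) ^ 2 + (x.2 - a.2) ^ 2) < r} :=
    integrableOn_disk_of_vanish hε hU hUD (by fun_prop)
      (fun x hx => by simp [hvan x hx, hdvan x hx])
  have hG : IntegrableOn (fun x : ℝ × ℝ => ‖u x‖ ^ 2 / ((x.1 - a.1) ^ 2 + (x.2 - a.2) ^ 2))
      {x : ℝ × ℝ | √((x.1 - a.1) ^ 2 + (x.2 - a.2) ^ 2) < r} :=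
    integrableOn_disk_of_vanish hε hU hUD ((huc.norm.pow 2).div (by fun_prop) hne)
      (fun x hx => by simp [hvan x hx])
  rw [ge_iff_le, ← sub_nonneg, ← integral_const_mul, ← integral_sub hF (hG.const_mul _)]
  refine setIntegral_disk_nonneg_of_circles a r _ fun ρ hρ hρr => ?_
  refine integral_circle_magnetic_energy_nonneg a hρ hU hu1 (fun t => hUD ?_) fun x => rfl
  have hρ2 : (ρ * cos t) ^ 2 + (ρ * sin t) ^ 2 = ρ ^ 2 := by
    linear_combination ρ ^ 2 * sin_sq_add_cos_sq t
  simpa [hρ2, sqrt_sq hρ.le] using hρr.le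
end
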